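/- Let G and H be strongly regular graphs on the vertex set {1,…,n}, with adjacency matrices A_G and A_H, and suppose G and H are co-spectral. Then there exists a real orthogonal n×n matrix Q (i.e. Q Qᵀ = I) such that Q A_G Qᵀ = A_H and Q (J − I − A_G) Qᵀ = J − I − A_H, where I is the identity matrix and J the all-ones matrix. -/

import Mathlib

open Matrix

namespace Matrix

variable {m : Type*} [Fintype m] [DecidableEq m]

/-- Real symmetric matrices with the same characteristic polynomial are orthogonally similar. -/
theorem IsSymm.exists_orthogonal_conj_of_charpoly_eq {A B : Matrix m m ℝ}
    (hA : A.IsSymm) (hB : B.IsSymm) (h : A.charpoly = B.charpoly) :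
    ∃ Q : Matrix m m ℝ, Q * Qᵀ = 1 ∧ Q * A * Qᵀ = B := by
  have hA' : A.IsHermitian := by rwa [IsHermitian, conjTranspose_eq_transpose_of_trivial]
  have hB' : B.IsHermitian := by rwa [IsHermitian, conjTranspose_eq_transpose_of_trivial]
  have hev : hA'.eigenvalues = hB'.eigenvalues := (hA'.eigenvalues_eq_eigenvalues_iff hB').2 h
  have sA := hA'.spectral_theorem
  have sB := hB'.spectral_theorem
  rw [Unitary.conjStarAlgAut_apply, hev] at sA
  rw [Unitary.conjStarAlgAut_apply] at sB
  have hU := Unitary.coe_star_mul_self hA'.eigenvectorUnitary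
  have hV := Unitary.coe_mul_star_self hB'.eigenvectorUnitary
  rw [Unitary.coe_star] at hV
  generalize (hA'.eigenvectorUnitary : Matrix m m ℝ) = U at *
  generalize (hB'.eigenvectorUnitary : Matrix m m ℝ) = V at *
  generalize diagonal ((RCLike.ofReal : ℝ → ℝ) ∘ hB'.eigenvalues) = D at *
  simp only [star_eq_conjTranspose, conjTranspose_eq_transpose_of_trivial] at *
  refine ⟨V * Uᵀ, ?_, ?_⟩
  · rw [transpose_mul, transpose_transpose, Matrix.mul_assoc, ← Matrix.mul_assoc Uᵀ, hU,
      Matrix.one_mul, hV]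
  · calc V * Uᵀ * A * (V * Uᵀ)ᵀ = V * (Uᵀ * U) * D * (Uᵀ * U) * Vᵀ := by
          rw [sA, transpose_mul, transpose_transpose]; simp only [Matrix.mul_assoc]
      _ = B := by rw [hU, Matrix.mul_one, Matrix.mul_one, sB]

/-- A symmetric matrix commutes with some orthogonal matrix carrying one eigenvector to another
eigenvector of the same length and eigenvalue (a Householder reflection). -/
theorem IsSymm.exists_orthogonal_commute_mulVec_eq {B : Matrix m m ℝ} (hB : B.IsSymm) {c : ℝ}
    {u v : m → ℝ} (hu : B *ᵥ u = c • u) (hv : B *ᵥ v = c • v) (huv : u ⬝ᵥ u = v ⬝ᵥ v) :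
    ∃ R : Matrix m m ℝ, R * Rᵀ = 1 ∧ R * B = B * R ∧ R *ᵥ u = v := by
  by_cases hw : u - v = 0
  · exact ⟨1, by simp, by simp, by simpa using sub_eq_zero.1 hw⟩
  have hw0 : (u - v) ⬝ᵥ (u - v) ≠ 0 := fun h => hw (dotProduct_self_eq_zero.1 h)
  have hwu : 2 * ((u - v) ⬝ᵥ u) = (u - v) ⬝ᵥ (u - v) := by
    simp only [sub_dotProduct, dotProduct_sub, dotProduct_comm v u]; linarith
  have hBw : B *ᵥ (u - v) = c • (u - v) := by rw [mulVec_sub, hu, hv, smul_sub]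
  have huw : u - (u - v) = v := sub_sub_cancel u v
  generalize u - v = w at *
  have hwB : w ᵥ* B = c • w := by rw [← mulVec_transpose, hB.eq, hBw]
  refine ⟨1 - (2 / (w ⬝ᵥ w)) • vecMulVec w w, ?_, ?_, ?_⟩
  · have h2 : vecMulVec w w * vecMulVec w w = (w ⬝ᵥ w) • vecMulVec w w := by
      rw [vecMulVec_mul_vecMulVec, vecMulVec_smul]
    rw [transpose_sub, transpose_one, transpose_smul, transpose_vecMulVec, sub_mul, mul_sub,
      mul_sub, smul_mul_smul_comm, h2, smul_smul, Matrix.one_mul, Matrix.one_mul, Matrix.mul_one]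
    have : 2 / (w ⬝ᵥ w) * (2 / (w ⬝ᵥ w)) * (w ⬝ᵥ w) = 2 * (2 / (w ⬝ᵥ w)) := by field_simp
    rw [this, mul_smul, two_smul]
    abel
  · rw [sub_mul, mul_sub, Matrix.one_mul, Matrix.mul_one, Matrix.smul_mul, Matrix.mul_smul,
      vecMulVec_mul, mul_vecMulVec, hwB, hBw, vecMulVec_smul, smul_vecMulVec]
  · rw [sub_mulVec, one_mulVec, smul_mulVec, vecMulVec_mulVec, op_smul_eq_smul, smul_smul,
      div_mul_eq_mul_div, hwu, div_self hw0, one_smul, huw]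

end Matrix

namespace SimpleGraph

variable {V : Type*} [Fintype V] {G H : SimpleGraph V}
  [DecidableRel G.Adj] [DecidableRel H.Adj] {r s : ℕ}

theorem IsRegularOfDegree.adjMatrix_mulVec_one (hG : G.IsRegularOfDegree r) :
    G.adjMatrix ℝ *ᵥ 1 = (r : ℝ) • (1 : V → ℝ) := by
  ext v
  simp [hG.degree_eq v, Pi.one_def]

theorem IsRegularOfDegree.trace_adjMatrix_mul_self (hG : G.IsRegularOfDegree r) :
    trace (G.adjMatrix ℝ * G.adjMatrix ℝ) = Fintype.card V * r := by
  simp only [trace, diag_apply, adjMatrix_mul_self_apply_self, hG.degree_eq, Finset.sum_const,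
    Finset.card_univ, nsmul_eq_mul]

/-- The adjacency matrices of co-spectral regular graphs are conjugate by an orthogonal matrix
fixing the all-ones vector. -/
theorem IsRegularOfDegree.exists_orthogonal_conj [DecidableEq V] (hG : G.IsRegularOfDegree r)
    (hH : H.IsRegularOfDegree s) (h : (G.adjMatrix ℝ).charpoly = (H.adjMatrix ℝ).charpoly) :
    ∃ Q : Matrix V V ℝ, Q * Qᵀ = 1 ∧ Q * G.adjMatrix ℝ * Qᵀ = H.adjMatrix ℝ ∧
      Q *ᵥ 1 = 1 := by
  cases isEmpty_or_nonempty V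
  · exact ⟨1, Subsingleton.elim _ _, Subsingleton.elim _ _, Subsingleton.elim _ _⟩
  obtain ⟨P, hP, hPA⟩ :=
    (G.isSymm_adjMatrix (α := ℝ)).exists_orthogonal_conj_of_charpoly_eq H.isSymm_adjMatrix h
  have hP' : Pᵀ * P = 1 := mul_eq_one_comm.1 hP
  have hcomm : H.adjMatrix ℝ * P = P * G.adjMatrix ℝ := by
    rw [← hPA, Matrix.mul_assoc, hP', Matrix.mul_one]
  have htr : trace (H.adjMatrix ℝ * H.adjMatrix ℝ) = trace (G.adjMatrix ℝ * G.adjMatrix ℝ) := by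
    nth_rewrite 2 [← hPA]
    rw [← Matrix.mul_assoc, ← Matrix.mul_assoc, hcomm, trace_mul_comm, ← Matrix.mul_assoc,
      ← Matrix.mul_assoc, hP', Matrix.one_mul]
  have hsr : (s : ℝ) = r := by
    rw [hG.trace_adjMatrix_mul_self, hH.trace_adjMatrix_mul_self] at htr
    exact mul_left_cancel₀ (Nat.cast_ne_zero.2 Fintype.card_ne_zero) htr
  have hu : H.adjMatrix ℝ *ᵥ (P *ᵥ 1) = (r : ℝ) • (P *ᵥ 1) := by
    rw [mulVec_mulVec, hcomm, ← mulVec_mulVec, hG.adjMatrix_mulVec_one, mulVec_smul]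
  have hnorm : (P *ᵥ 1) ⬝ᵥ (P *ᵥ 1) = (1 : V → ℝ) ⬝ᵥ 1 := by
    rw [dotProduct_mulVec, ← mulVec_transpose, mulVec_mulVec, hP', one_mulVec]
  obtain ⟨R, hR, hRB, hR1⟩ := H.isSymm_adjMatrix.exists_orthogonal_commute_mulVec_eq hu
    (hsr ▸ hH.adjMatrix_mulVec_one) hnorm
  refine ⟨R * P, ?_, ?_, by rw [← mulVec_mulVec, hR1]⟩
  · rw [transpose_mul, Matrix.mul_assoc, ← Matrix.mul_assoc P, hP, Matrix.one_mul, hR]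
  · calc R * P * G.adjMatrix ℝ * (R * P)ᵀ = R * (P * G.adjMatrix ℝ * Pᵀ) * Rᵀ := by
          rw [transpose_mul]; simp only [Matrix.mul_assoc]
      _ = H.adjMatrix ℝ := by rw [hPA, hRB, Matrix.mul_assoc, hR, Matrix.mul_one]

end SimpleGraph

/-- If `G` and `H` are co-spectral strongly regular graphs on
`{1,…,n}`, then there is a real orthogonal matrix `Q` with
`Q A_G Qᵀ = A_H` and `Q (J - I - A_G) Qᵀ = J - I - A_H`. -/
theorem exists_orthogonal_conjugating_srg (n r₁ l₁ m₁ r₂ l₂ m₂ : ℕ)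
    (G H : SimpleGraph (Fin n)) [DecidableRel G.Adj] [DecidableRel H.Adj]
    (hG : G.IsSRGWith n r₁ l₁ m₁) (hH : H.IsSRGWith n r₂ l₂ m₂)
    (h : (G.adjMatrix ℝ).charpoly = (H.adjMatrix ℝ).charpoly) :
    ∃ Q : Matrix (Fin n) (Fin n) ℝ, Q * Qᵀ = 1 ∧
      Q * G.adjMatrix ℝ * Qᵀ = H.adjMatrix ℝ ∧
      Q * (Matrix.of (fun _ _ => (1 : ℝ)) - 1 - G.adjMatrix ℝ) * Qᵀ =
        Matrix.of (fun _ _ => (1 : ℝ)) - 1 - H.adjMatrix ℝ := by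
  obtain ⟨Q, hQ, hQA, hQ1⟩ := hG.regular.exists_orthogonal_conj hH.regular h
  refine ⟨Q, hQ, hQA, ?_⟩
  have hJ : Matrix.of (fun _ _ => (1 : ℝ)) = vecMulVec (1 : Fin n → ℝ) (1 : Fin n → ℝ) := by
    ext i j
    simp [vecMulVec_apply]
  rw [mul_sub, mul_sub, sub_mul, sub_mul, hQA, Matrix.mul_one, hQ, hJ, mul_vecMulVec, hQ1,
    vecMulVec_mul, vecMul_transpose, hQ1]
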